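/- Let G and G′ be enclosures in V and let g₁,…,g_n and g′₁,…,g′_n (n ≥ 1) be elements of the affine Weyl group W_aff. Then the set {x ∈ G ∩ G′ : gᵢ(x) = g′ᵢ(x) for all i = 1,…,n} is again an enclosure (possibly empty), i.e. a bounded intersection of finitely many root half-spaces. (This is the key computation in the proof that any subsheaf of a finite product of representable sheaves on the site of enclosures is finitely related.) -/

import Mathlib

open scoped BigOperators

/-- The standard Cartan plane of type A₂: `{x ∈ ℝ³ : x₁ + x₂ + x₃ = 0}`. -/
abbrev Cartan : Type := {x : Fin 3 → ℝ // ∑ i, x i = 0}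

/-- The root half-space `{x : xᵢ − xⱼ ≥ c}`. -/
def RootHalfSpace (i j : Fin 3) (c : ℝ) : Set Cartan := {x | c ≤ x.1 i - x.1 j}

/-- The root hyperplane `{x : xᵢ − xⱼ = c}`. -/
def RootHyperplane (i j : Fin 3) (c : ℝ) : Set Cartan := {x | x.1 i - x.1 j = c}

/-- An enclosure: a bounded subset of the Cartan plane which is an intersection of
finitely many root half-spaces. -/
def IsEnclosure (E : Set Cartan) : Prop :=
  Bornology.IsBounded E ∧
  ∃ s : Finset (Fin 3 × Fin 3 × ℝ),
    (∀ p ∈ s, p.1 ≠ p.2.1) ∧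
    E = ⋂ p ∈ s, RootHalfSpace p.1 p.2.1 p.2.2

/-- An element of the affine Weyl group: `x ↦ σ·x + v` with `σ ∈ S₃` permuting
coordinates and `v` in the Cartan plane. -/
def IsAffWeyl (g : Cartan → Cartan) : Prop :=
  ∃ (σ : Equiv.Perm (Fin 3)) (v : Cartan),
    ∀ (x : Cartan) (i : Fin 3), (g x).1 i = x.1 (σ i) + v.1 i

theorem isAffWeyl_id : IsAffWeyl (fun x => x) := by
  refine ⟨Equiv.refl _, ⟨fun _ => 0, by simp⟩, ?_⟩
  intro x i
  simp

theorem IsAffWeyl.comp {g₂ g₁ : Cartan → Cartan} (h₂ : IsAffWeyl g₂) (h₁ : IsAffWeyl g₁) :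
    IsAffWeyl (fun x => g₂ (g₁ x)) := by
  obtain ⟨σ₂, v₂, hh₂⟩ := h₂
  obtain ⟨σ₁, v₁, hh₁⟩ := h₁
  refine ⟨σ₂.trans σ₁, ⟨fun i => v₁.1 (σ₂ i) + v₂.1 i, ?_⟩, ?_⟩
  · rw [Finset.sum_add_distrib, Equiv.sum_comp σ₂ v₁.1, v₁.2, v₂.2, add_zero]
  · intro x i
    rw [hh₂, hh₁]
    simp [Equiv.trans_apply]
    ring

/-- A finite intersection of root half-spaces (no boundedness required). -/
def IsFinRoot (E : Set Cartan) : Prop :=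
  ∃ s : Finset (Fin 3 × Fin 3 × ℝ),
    (∀ p ∈ s, p.1 ≠ p.2.1) ∧
    E = ⋂ p ∈ s, RootHalfSpace p.1 p.2.1 p.2.2

theorem IsFinRoot.iInter {n : ℕ} {E : Fin n → Set Cartan} (h : ∀ i, IsFinRoot (E i)) :
    IsFinRoot (⋂ i, E i) := by
  classical
  choose s hs hE using h
  refine ⟨Finset.univ.biUnion s, ?_, ?_⟩
  · intro p hp
    obtain ⟨i, -, hi⟩ := Finset.mem_biUnion.1 hp
    exact hs i p hi
  · ext x
    simp only [hE, Set.mem_iInter, Finset.mem_biUnion, Finset.mem_univ, true_and]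
    exact ⟨fun H p ⟨i, hi⟩ => H i p hi, fun H i p hi => H p ⟨i, hi⟩⟩

theorem IsFinRoot.inter {E F : Set Cartan} (hE : IsFinRoot E) (hF : IsFinRoot F) :
    IsFinRoot (E ∩ F) := by
  classical
  obtain ⟨s, hs, rfl⟩ := hE
  obtain ⟨t, ht, rfl⟩ := hF
  refine ⟨s ∪ t, ?_, ?_⟩
  · intro p hp
    rcases Finset.mem_union.1 hp with h | h
    · exact hs p h
    · exact ht p h
  · ext x
    simp only [Set.mem_inter_iff, Set.mem_iInter, Finset.mem_union]
    exact ⟨fun H p hp => hp.elim (H.1 p) (H.2 p),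
      fun H => ⟨fun p hp => H p (Or.inl hp), fun p hp => H p (Or.inr hp)⟩⟩

theorem isFinRoot_halfSpace {i j : Fin 3} (h : i ≠ j) (c : ℝ) :
    IsFinRoot (RootHalfSpace i j c) :=
  ⟨{(i, j, c)}, by simpa using h, by simp⟩

/-- The hyperplane `xᵢ - xⱼ = c`, where `i = j` is allowed (then it is everything or empty). -/
theorem isFinRoot_hyperplane (i j : Fin 3) (c : ℝ) : IsFinRoot (RootHyperplane i j c) := by
  by_cases h : i = j
  · subst h
    by_cases hc : c = 0
    · refine ⟨∅, by simp, ?_⟩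
      ext x
      simp [RootHyperplane, hc]
    · have h01 : (0 : Fin 3) ≠ 1 := by decide
      have key := (isFinRoot_halfSpace h01 1).inter (isFinRoot_halfSpace h01.symm 1)
      convert key using 1
      ext x
      simp only [RootHyperplane, RootHalfSpace, Set.mem_ofPred_eq, Set.mem_inter_iff, sub_self]
      constructor
      · intro h0
        exact absurd h0.symm hc
      · rintro ⟨h1, h2⟩
        linarith
  · have key := (isFinRoot_halfSpace h c).inter (isFinRoot_halfSpace (Ne.symm h) (-c))
    convert key using 1
    ext x
    simp only [RootHyperplane, RootHalfSpace, Set.mem_ofPred_eq, Set.mem_inter_iff]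
    constructor
    · intro h0
      constructor <;> linarith
    · rintro ⟨h1, h2⟩
      linarith

theorem isFinRoot_eq {g g' : Cartan → Cartan} (hg : IsAffWeyl g) (hg' : IsAffWeyl g') :
    IsFinRoot {x | g x = g' x} := by
  obtain ⟨σ, v, h⟩ := hg
  obtain ⟨σ', v', h'⟩ := hg'
  have key := IsFinRoot.iInter
    (fun k : Fin 3 => isFinRoot_hyperplane (σ k) (σ' k) (v'.1 k - v.1 k))
  convert key using 1
  ext x
  simp only [Set.mem_ofPred_eq, Set.mem_iInter, RootHyperplane, Subtype.ext_iff, funext_iff, h, h']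
  refine forall_congr' fun k => ?_
  constructor <;> intro hk <;> linarith

/-- For enclosures `G`, `G'` and affine Weyl elements `g₁,…,g_n` and
`g'₁,…,g'_n` (`n ≥ 1`), the set `{x ∈ G ∩ G' : gᵢ(x) = g'ᵢ(x) for all i}` is again an
enclosure (possibly empty), i.e. a bounded intersection of finitely many root half-spaces. -/
theorem isEnclosure_equalizer (G G' : Set Cartan)
    (hG : IsEnclosure G) (hG' : IsEnclosure G')
    (n : ℕ) (hn : 1 ≤ n) (g g' : Fin n → (Cartan → Cartan))
    (hg : ∀ i, IsAffWeyl (g i)) (hg' : ∀ i, IsAffWeyl (g' i)) :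
    IsEnclosure {x : Cartan | x ∈ G ∩ G' ∧ ∀ i, g i x = g' i x} := by
  refine ⟨hG.1.subset fun x hx => hx.1.1, ?_⟩
  have key : IsFinRoot ((G ∩ G') ∩ ⋂ i, {x | g i x = g' i x}) :=
    (IsFinRoot.inter hG.2 hG'.2).inter (IsFinRoot.iInter fun i => isFinRoot_eq (hg i) (hg' i))
  have e : {x : Cartan | x ∈ G ∩ G' ∧ ∀ i, g i x = g' i x} =
      (G ∩ G') ∩ ⋂ i, {x | g i x = g' i x} := by
    ext x
    simp
    tauto
  rw [e]
  exact key
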